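/- Let M be a matching of maximum weight among all matchings of size n/3 in G. Consider the complete directed graph on vertex set V(M) in which the arc (u, v) has weight w(uv). Then there exists a set A of arcs in which every vertex has in-degree at most 1 and out-degree at most 2, whose total weight is at least 2·w(Y_5) + 2·w(Y_6) + w(P*_7) + w(P*_8) + Σ_{xyz ∈ P*_7 ∪ P*_8} max{w(xy), w(yz)}. -/

import Mathlib

open Finset
open scoped Classical

namespace MW3PP

/-- A 3-path `xyz`: a path on three distinct vertices with middle vertex `y`. -/
structure P3 (V : Type*) where
  x : V
  y : V
  z : V
  hxy : x ≠ y
  hyz : y ≠ z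
  hxz : x ≠ z

variable {V : Type*} [Fintype V] [DecidableEq V]

/-- The vertex set of a 3-path. -/
def P3.verts (p : P3 V) : Finset V := {p.x, p.y, p.z}

/-- The two edges of a 3-path. -/
def P3.edges (p : P3 V) : Finset (Sym2 V) := {s(p.x, p.y), s(p.y, p.z)}

/-- The weight of a 3-path. -/
def P3.wt (w : Sym2 V → ℝ) (p : P3 V) : ℝ := w s(p.x, p.y) + w s(p.y, p.z)

/-- The total weight of a set of edges. -/
def ew (w : Sym2 V → ℝ) (F : Finset (Sym2 V)) : ℝ := ∑ e ∈ F, w e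

/-- The total weight of a set of 3-paths. -/
def pw (w : Sym2 V → ℝ) (P : Finset (P3 V)) : ℝ := ∑ p ∈ P, p.wt w

/-- `∑_{xyz ∈ S} max (w (xy)) (w (yz))`. -/
def maxSum (w : Sym2 V → ℝ) (S : Finset (P3 V)) : ℝ :=
  ∑ p ∈ S, max (w s(p.x, p.y)) (w s(p.y, p.z))

/-- A perfect 3-path packing: `n/3` pairwise vertex-disjoint 3-paths covering all vertices. -/
def IsPacking (P : Finset (P3 V)) : Prop :=
  P.card = Fintype.card V / 3 ∧
  (∀ p ∈ P, ∀ q ∈ P, p ≠ q → Disjoint p.verts q.verts) ∧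
  (∀ v : V, ∃ p ∈ P, v ∈ p.verts)

/-- A maximum-weight perfect 3-path packing. -/
def IsMaxPacking (w : Sym2 V → ℝ) (P : Finset (P3 V)) : Prop :=
  IsPacking P ∧ ∀ Q : Finset (P3 V), IsPacking Q → pw w Q ≤ pw w P

/-- A matching: a set of pairwise vertex-disjoint (non-loop) edges. -/
def IsMatching (M : Finset (Sym2 V)) : Prop :=
  (∀ e ∈ M, ¬ e.IsDiag) ∧
  ∀ e ∈ M, ∀ f ∈ M, e ≠ f → ∀ v : V, v ∈ e → v ∉ f

/-- A maximum-weight matching among all matchings of size `k`. -/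
def IsMaxMatchingOfSize (w : Sym2 V → ℝ) (k : ℕ) (M : Finset (Sym2 V)) : Prop :=
  IsMatching M ∧ M.card = k ∧
  ∀ M' : Finset (Sym2 V), IsMatching M' → M'.card = k → ew w M' ≤ ew w M

/-- `v ∈ V(M)` : vertex `v` is covered by the matching `M`. -/
def covered (M : Finset (Sym2 V)) (v : V) : Prop := ∃ e ∈ M, v ∈ e

/-- `e_u` : the edge of `M` containing `u` (junk value if there is none). -/
noncomputable def eMatch (M : Finset (Sym2 V)) (u : V) : Sym2 V :=
  if h : ∃ e ∈ M, u ∈ e then h.choose else s(u, u)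

/-- The cost `c` of an edge with respect to a matching `M`:
`c(uv) = w(uv) - min (w (e_u)) (w (e_v))` if both endpoints are covered by `M`,
and `c(uv) = w(uv)` otherwise. -/
noncomputable def cost (w : Sym2 V → ℝ) (M : Finset (Sym2 V)) : Sym2 V → ℝ :=
  Sym2.lift ⟨fun u v =>
    if covered M u ∧ covered M v then
      w s(u, v) - min (w (eMatch M u)) (w (eMatch M v))
    else w s(u, v), by
      intro u v
      dsimp only
      by_cases h : covered M u ∧ covered M v
      · rw [if_pos h, if_pos (show covered M v ∧ covered M u from ⟨h.2, h.1⟩),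
          Sym2.eq_swap, min_comm]
      · rw [if_neg h, if_neg (show ¬(covered M v ∧ covered M u) from fun h' => h ⟨h'.2, h'.1⟩),
          Sym2.eq_swap]⟩

/-- The total cost of a set of edges. -/
noncomputable def cw (w : Sym2 V → ℝ) (M F : Finset (Sym2 V)) : ℝ := ∑ e ∈ F, cost w M e

/-- The number of vertices of the 3-path `p` covered by `M`. -/
noncomputable def kcnt (M : Finset (Sym2 V)) (p : P3 V) : ℕ :=
  (p.verts.filter fun v => covered M v).card

/-- Exactly one of the two edges of `p` lies in `M`. -/
def exOne (M : Finset (Sym2 V)) (p : P3 V) : Prop :=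
  (s(p.x, p.y) ∈ M ∧ s(p.y, p.z) ∉ M) ∨ (s(p.x, p.y) ∉ M ∧ s(p.y, p.z) ∈ M)

def cls1 (M : Finset (Sym2 V)) (p : P3 V) : Prop := kcnt M p = 0
def cls2 (M : Finset (Sym2 V)) (p : P3 V) : Prop := kcnt M p = 1 ∧ ¬ covered M p.y
def cls3 (M : Finset (Sym2 V)) (p : P3 V) : Prop := kcnt M p = 1 ∧ covered M p.y
def cls4 (M : Finset (Sym2 V)) (p : P3 V) : Prop := kcnt M p = 2 ∧ ¬ covered M p.y
def cls5 (M : Finset (Sym2 V)) (p : P3 V) : Prop := kcnt M p = 2 ∧ covered M p.y ∧ exOne M p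
def cls6 (M : Finset (Sym2 V)) (p : P3 V) : Prop :=
  kcnt M p = 2 ∧ covered M p.y ∧ s(p.x, p.y) ∉ M ∧ s(p.y, p.z) ∉ M
def cls7 (M : Finset (Sym2 V)) (p : P3 V) : Prop := kcnt M p = 3 ∧ exOne M p
def cls8 (M : Finset (Sym2 V)) (p : P3 V) : Prop :=
  kcnt M p = 3 ∧ s(p.x, p.y) ∉ M ∧ s(p.y, p.z) ∉ M

/-- The subset of a set of 3-paths satisfying a predicate. -/
noncomputable def psel (P : Finset (P3 V)) (c : P3 V → Prop) : Finset (P3 V) := P.filter c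

/-- The set of all edges of the 3-paths in `S`. -/
def Esub (S : Finset (P3 V)) : Finset (Sym2 V) := S.biUnion P3.edges

/-- The heaviest edge of a 3-path (the edge `xy` in case of a tie). -/
noncomputable def heavy (w : Sym2 V → ℝ) (p : P3 V) : Sym2 V :=
  if w s(p.y, p.z) ≤ w s(p.x, p.y) then s(p.x, p.y) else s(p.y, p.z)

noncomputable def X1 (w : Sym2 V → ℝ) (P : Finset (P3 V)) (M : Finset (Sym2 V)) :
    Finset (Sym2 V) := (psel P (cls1 M)).image (heavy w)
noncomputable def X2 (P : Finset (P3 V)) (M : Finset (Sym2 V)) : Finset (Sym2 V) :=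
  (psel P (cls2 M)).image fun p => if covered M p.x then s(p.x, p.y) else s(p.y, p.z)
noncomputable def X3 (w : Sym2 V → ℝ) (P : Finset (P3 V)) (M : Finset (Sym2 V)) :
    Finset (Sym2 V) := (psel P (cls3 M)).image (heavy w)
noncomputable def X4 (w : Sym2 V → ℝ) (P : Finset (P3 V)) (M : Finset (Sym2 V)) :
    Finset (Sym2 V) := (psel P (cls4 M)).image (heavy w)
noncomputable def X5 (P : Finset (P3 V)) (M : Finset (Sym2 V)) : Finset (Sym2 V) :=
  (psel P (cls5 M)).image fun p => if s(p.x, p.y) ∈ M then s(p.y, p.z) else s(p.x, p.y)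
noncomputable def X6 (P : Finset (P3 V)) (M : Finset (Sym2 V)) : Finset (Sym2 V) :=
  (psel P (cls6 M)).image fun p => if covered M p.x then s(p.y, p.z) else s(p.x, p.y)
noncomputable def X7 (P : Finset (P3 V)) (M : Finset (Sym2 V)) : Finset (Sym2 V) :=
  (psel P (cls7 M)).image fun p => if s(p.x, p.y) ∈ M then s(p.y, p.z) else s(p.x, p.y)
noncomputable def X8 (w : Sym2 V → ℝ) (P : Finset (P3 V)) (M : Finset (Sym2 V)) :
    Finset (Sym2 V) := (psel P (cls8 M)).image (heavy w)

noncomputable def Y1 (w : Sym2 V → ℝ) (P : Finset (P3 V)) (M : Finset (Sym2 V)) :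
    Finset (Sym2 V) := Esub (psel P (cls1 M)) \ X1 w P M
noncomputable def Y2 (P : Finset (P3 V)) (M : Finset (Sym2 V)) : Finset (Sym2 V) :=
  Esub (psel P (cls2 M)) \ X2 P M
noncomputable def Y3 (w : Sym2 V → ℝ) (P : Finset (P3 V)) (M : Finset (Sym2 V)) :
    Finset (Sym2 V) := Esub (psel P (cls3 M)) \ X3 w P M
noncomputable def Y4 (w : Sym2 V → ℝ) (P : Finset (P3 V)) (M : Finset (Sym2 V)) :
    Finset (Sym2 V) := Esub (psel P (cls4 M)) \ X4 w P M
noncomputable def Y5 (P : Finset (P3 V)) (M : Finset (Sym2 V)) : Finset (Sym2 V) :=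
  Esub (psel P (cls5 M)) \ X5 P M
noncomputable def Y6 (P : Finset (P3 V)) (M : Finset (Sym2 V)) : Finset (Sym2 V) :=
  Esub (psel P (cls6 M)) \ X6 P M
noncomputable def Y7 (P : Finset (P3 V)) (M : Finset (Sym2 V)) : Finset (Sym2 V) :=
  Esub (psel P (cls7 M)) \ X7 P M
noncomputable def Y8 (w : Sym2 V → ℝ) (P : Finset (P3 V)) (M : Finset (Sym2 V)) :
    Finset (Sym2 V) := Esub (psel P (cls8 M)) \ X8 w P M

/-- An edge is a middle edge (w.r.t. `M`) if exactly one of its endpoints lies in `V(M)`. -/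
def isMiddle (M : Finset (Sym2 V)) (e : Sym2 V) : Prop :=
  ∃ u v : V, e = s(u, v) ∧ covered M u ∧ ¬ covered M v

/-- Two edges share a vertex. -/
def shares (e f : Sym2 V) : Prop := ∃ v, v ∈ e ∧ v ∈ f

/-- `g` is a middle edge of some 3-path in `S`. -/
def middleIn (M : Finset (Sym2 V)) (S : Finset (P3 V)) (g : Sym2 V) : Prop :=
  (∃ p ∈ S, g ∈ p.edges) ∧ isMiddle M g

/-- The 3-paths of `P` lying in classes 2, 3 or 4. -/
noncomputable def P234 (P : Finset (P3 V)) (M : Finset (Sym2 V)) : Finset (P3 V) :=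
  psel P fun p => cls2 M p ∨ cls3 M p ∨ cls4 M p

/-- `M_1`: edges of `M` sharing a vertex with at least one middle edge of a 3-path of `P*_6`. -/
noncomputable def Mset1 (P : Finset (P3 V)) (M : Finset (Sym2 V)) : Finset (Sym2 V) :=
  M.filter fun f => ∃ g, middleIn M (psel P (cls6 M)) g ∧ shares f g

/-- `M_2`: edges of `M` sharing a vertex with at least one middle edge, all middle edges met
belonging to 3-paths of `P*_2 ∪ P*_3 ∪ P*_4`. -/
noncomputable def Mset2 (P : Finset (P3 V)) (M : Finset (Sym2 V)) : Finset (Sym2 V) :=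
  M.filter fun f =>
    (∃ g, middleIn M P g ∧ shares f g) ∧
    ∀ g, middleIn M P g → shares f g → middleIn M (P234 P M) g

/-- `M_3 = M ∩ E(P*_7)`. -/
noncomputable def Mset3 (P : Finset (P3 V)) (M : Finset (Sym2 V)) : Finset (Sym2 V) :=
  M ∩ Esub (psel P (cls7 M))

/-- `M_4 = M ∩ E(P*_5)`. -/
noncomputable def Mset4 (P : Finset (P3 V)) (M : Finset (Sym2 V)) : Finset (Sym2 V) :=
  M ∩ Esub (psel P (cls5 M))

/-- The middle edges of 3-paths of `P*_6`. -/
noncomputable def mid6 (P : Finset (P3 V)) (M : Finset (Sym2 V)) : Finset (Sym2 V) :=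
  (Esub (psel P (cls6 M))).filter (isMiddle M)

/-- `M'_1`: edges of `M_1` meeting exactly one middle edge of a 3-path of `P*_6` and
no middle edge of a 3-path of `P*_2 ∪ P*_3 ∪ P*_4`. -/
noncomputable def Mset1' (P : Finset (P3 V)) (M : Finset (Sym2 V)) : Finset (Sym2 V) :=
  (Mset1 P M).filter fun f =>
    ((mid6 P M).filter fun g => shares f g).card = 1 ∧
    ∀ g, middleIn M (P234 P M) g → ¬ shares f g

/-- `M''_1`: edges of `M_1` meeting two middle edges of 3-paths of `P*_6`. -/
noncomputable def Mset1'' (P : Finset (P3 V)) (M : Finset (Sym2 V)) : Finset (Sym2 V) :=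
  (Mset1 P M).filter fun f => ((mid6 P M).filter fun g => shares f g).card = 2

/-- `M'''_1`: edges of `M_1` meeting exactly one middle edge of a 3-path of `P*_6` and
at least one middle edge of a 3-path of `P*_2 ∪ P*_3 ∪ P*_4`. -/
noncomputable def Mset1''' (P : Finset (P3 V)) (M : Finset (Sym2 V)) : Finset (Sym2 V) :=
  (Mset1 P M).filter fun f =>
    ((mid6 P M).filter fun g => shares f g).card = 1 ∧
    ∃ g, middleIn M (P234 P M) g ∧ shares f g

/-- Assumption on `P*`: for every 3-path `xyz ∈ P*` with `y ∉ V(M)` and `x, z ∈ V(M)`,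
the vertices `x` and `z` lie in two distinct edges of `M`. -/
def Ass (P : Finset (P3 V)) (M : Finset (Sym2 V)) : Prop :=
  ∀ p ∈ P, ¬ covered M p.y → covered M p.x → covered M p.z →
    ∃ e ∈ M, ∃ f ∈ M, p.x ∈ e ∧ p.z ∈ f ∧ e ≠ f

/-- An admissible edge w.r.t. `M`: either both endpoints are in `V(M)` and lie in two distinct
edges of `M`, or exactly one endpoint is in `V(M)`. -/
def goodEdge (M : Finset (Sym2 V)) (e : Sym2 V) : Prop :=
  (∃ u v : V, e = s(u, v) ∧ covered M u ∧ covered M v ∧ ∀ f ∈ M, ¬(u ∈ f ∧ v ∈ f)) ∨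
  (∃ u v : V, e = s(u, v) ∧ covered M u ∧ ¬ covered M v)

/-!
Every 3-path is served by arcs inside its own set of covered vertices, so vertex-disjointness keeps
the degree bounds of the union. A path with exactly two covered vertices, one of them the middle
one, has a single edge inside `V(M)`, namely the one in `Y_5` or `Y_6`; orient it both ways. A fully
covered path `xyz` gets the arcs `(y, x)` and `(y, z)` together with the reversal of the heavier of
the two. Since distinct paths share no edge, the weights add up exactly.
-/

section ArcSystem

variable {α ι : Type*} [DecidableEq α] {S : Set α}

/-- The digraphs to be constructed: loopless sets of arcs between vertices of `S` with in-degrees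
at most 1 and out-degrees at most 2. -/
structure IsArcSystemOn (S : Set α) (A : Finset (α × α)) : Prop where
  fst_mem : ∀ a ∈ A, a.1 ∈ S
  snd_mem : ∀ a ∈ A, a.2 ∈ S
  fst_ne_snd : ∀ a ∈ A, a.1 ≠ a.2
  inDegree_le : ∀ v, #{a ∈ A | a.2 = v} ≤ 1
  outDegree_le : ∀ v, #{a ∈ A | a.1 = v} ≤ 2

lemma isArcSystemOn_empty : IsArcSystemOn S ∅ := by
  constructor <;> simp

lemma isArcSystemOn_pair {u v : α} (hu : u ∈ S) (hv : v ∈ S) (huv : u ≠ v) :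
    IsArcSystemOn S {(u, v), (v, u)} where
  fst_mem := by simp [hu, hv]
  snd_mem := by simp [hu, hv]
  fst_ne_snd := by simp [huv, huv.symm]
  inDegree_le t := card_le_one.2 <| by
    simp only [mem_filter, mem_insert, mem_singleton]
    grind
  outDegree_le _ := (card_filter_le _ _).trans card_le_two

lemma isArcSystemOn_triple {x y z : α} (hx : x ∈ S) (hy : y ∈ S) (hz : z ∈ S)
    (hxy : x ≠ y) (hyz : y ≠ z) (hxz : x ≠ z) :
    IsArcSystemOn S {(x, y), (y, x), (y, z)} where
  fst_mem := by simp [hx, hy]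
  snd_mem := by simp [hx, hy, hz]
  fst_ne_snd := by simp [hxy, hxy.symm, hyz]
  inDegree_le t := card_le_one.2 <| by
    simp only [mem_filter, mem_insert, mem_singleton]
    grind
  outDegree_le t := by
    simp only [filter_insert, filter_singleton]
    grind

lemma exists_isArcSystemOn_sum_eq_two_mul {u v : α} (w : Sym2 α → ℝ)
    (hu : u ∈ S) (hv : v ∈ S) (huv : u ≠ v) :
    ∃ A, IsArcSystemOn S A ∧ ∑ a ∈ A, w s(a.1, a.2) = 2 * w s(u, v) := by
  refine ⟨_, isArcSystemOn_pair hu hv huv, ?_⟩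
  rw [sum_pair (by simp [huv]), Sym2.eq_swap (a := v), two_mul]

lemma exists_isArcSystemOn_sum_eq_two_mul_add {x y z : α} (w : Sym2 α → ℝ)
    (hx : x ∈ S) (hy : y ∈ S) (hz : z ∈ S) (hxy : x ≠ y) (hyz : y ≠ z) (hxz : x ≠ z) :
    ∃ A, IsArcSystemOn S A ∧ ∑ a ∈ A, w s(a.1, a.2) = 2 * w s(x, y) + w s(y, z) := by
  refine ⟨_, isArcSystemOn_triple hx hy hz hxy hyz hxz, ?_⟩
  rw [sum_insert (by simp [hxy]), sum_pair (by simp [hxz]), Sym2.eq_swap (a := y) (b := x)]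
  ring

lemma card_filter_biUnion_le {β : Type*} [DecidableEq β] {s : Finset ι} {S : ι → Set α}
    (hS : (s : Set ι).PairwiseDisjoint S) {B : ι → Finset β} {f : β → α}
    (hf : ∀ i ∈ s, ∀ b ∈ B i, f b ∈ S i) {k : ℕ} {v : α}
    (hk : ∀ i ∈ s, #{b ∈ B i | f b = v} ≤ k) : #{b ∈ s.biUnion B | f b = v} ≤ k := by
  by_cases hv : ∃ i ∈ s, v ∈ S i
  · obtain ⟨i, hi, hvi⟩ := hv
    refine (card_le_card fun b hb ↦ ?_).trans (hk i hi)
    simp only [mem_filter, mem_biUnion] at hb ⊢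
    obtain ⟨⟨j, hj, hbj⟩, rfl⟩ := hb
    obtain rfl : i = j := hS.elim_set hi hj _ hvi (hf j hj b hbj)
    exact ⟨hbj, rfl⟩
  · rw [filter_false_of_mem]
    · simp
    · rintro b hb rfl
      obtain ⟨i, hi, hbi⟩ := mem_biUnion.1 hb
      exact hv ⟨i, hi, hf i hi b hbi⟩

lemma isArcSystemOn_biUnion {s : Finset ι} {S : ι → Set α}
    (hS : (s : Set ι).PairwiseDisjoint S) {A : ι → Finset (α × α)}
    (hA : ∀ i ∈ s, IsArcSystemOn (S i) (A i)) :
    IsArcSystemOn (⋃ i ∈ s, S i) (s.biUnion A) where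
  fst_mem a ha := by
    obtain ⟨i, hi, hai⟩ := mem_biUnion.1 ha
    exact Set.mem_biUnion hi ((hA i hi).fst_mem a hai)
  snd_mem a ha := by
    obtain ⟨i, hi, hai⟩ := mem_biUnion.1 ha
    exact Set.mem_biUnion hi ((hA i hi).snd_mem a hai)
  fst_ne_snd a ha := by
    obtain ⟨i, hi, hai⟩ := mem_biUnion.1 ha
    exact (hA i hi).fst_ne_snd a hai
  inDegree_le v := card_filter_biUnion_le hS (fun i hi ↦ (hA i hi).snd_mem)
    fun i hi ↦ (hA i hi).inDegree_le v
  outDegree_le v := card_filter_biUnion_le hS (fun i hi ↦ (hA i hi).fst_mem)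
    fun i hi ↦ (hA i hi).outDegree_le v

lemma exists_isArcSystemOn_biUnion {s : Finset ι} {S : ι → Set α}
    (hS : (s : Set ι).PairwiseDisjoint S) {f : α × α → ℝ} {g : ι → ℝ}
    (h : ∀ i ∈ s, ∃ A, IsArcSystemOn (S i) A ∧ ∑ a ∈ A, f a = g i) :
    ∃ A, IsArcSystemOn (⋃ i ∈ s, S i) A ∧ ∑ a ∈ A, f a = ∑ i ∈ s, g i := by
  choose! A hA hf using h
  have hdisj : (s : Set ι).PairwiseDisjoint A := fun i hi j hj hij ↦
    disjoint_left.2 fun a hai haj ↦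
      Set.disjoint_left.1 (hS hi hj hij) ((hA i hi).fst_mem a hai) ((hA j hj).fst_mem a haj)
  refine ⟨s.biUnion A, isArcSystemOn_biUnion hS hA, ?_⟩
  rw [sum_biUnion hdisj, sum_congr rfl hf]

end ArcSystem

section Paths

variable {α : Type*} {P : Finset (P3 α)}

lemma sum_psel_or {c d : P3 α → Prop} (hcd : ∀ p, c p → ¬ d p) (f : P3 α → ℝ) :
    ∑ p ∈ psel P (fun p ↦ c p ∨ d p), f p = ∑ p ∈ psel P c, f p + ∑ p ∈ psel P d, f p := by
  have hunion : psel P (fun p ↦ c p ∨ d p) = psel P c ∪ psel P d := by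
    ext; simp [psel, and_or_left]
  exact hunion ▸ sum_union (disjoint_filter.2 fun p _ ↦ hcd p)

lemma P3.mk_xy_ne_mk_yz (p : P3 α) : s(p.x, p.y) ≠ s(p.y, p.z) := by
  simp [p.hxy, p.hxz]

variable [DecidableEq α] {M : Finset (Sym2 α)} {p : P3 α}

lemma pairwiseDisjoint_psel (hP : (P : Set (P3 α)).PairwiseDisjoint P3.verts) (c : P3 α → Prop) :
    (psel P c : Set (P3 α)).PairwiseDisjoint P3.verts :=
  hP.subset (filter_subset c P)

lemma P3.sum_edges (w : Sym2 α → ℝ) (p : P3 α) : ∑ e ∈ p.edges, w e = p.wt w :=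
  sum_pair p.mk_xy_ne_mk_yz

lemma P3.disjoint_edges {q : P3 α} (h : Disjoint p.verts q.verts) :
    Disjoint p.edges q.edges := by
  simp only [P3.verts, P3.edges, disjoint_left, mem_insert, mem_singleton] at h ⊢
  grind

lemma pairwiseDisjoint_edges (hP : (P : Set (P3 α)).PairwiseDisjoint P3.verts) :
    (P : Set (P3 α)).PairwiseDisjoint P3.edges :=
  fun _ hp _ hq hpq ↦ P3.disjoint_edges (hP hp hq hpq)

lemma ew_Esub (w : Sym2 α → ℝ) (hP : (P : Set (P3 α)).PairwiseDisjoint P3.verts) :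
    ew w (Esub P) = ∑ p ∈ P, p.wt w := by
  simp only [ew, Esub, sum_biUnion (pairwiseDisjoint_edges hP), P3.sum_edges]

lemma ew_Esub_sdiff_image (w : Sym2 α → ℝ) (hP : (P : Set (P3 α)).PairwiseDisjoint P3.verts)
    {f : P3 α → Sym2 α} (hf : ∀ p ∈ P, f p ∈ p.edges) :
    ew w (Esub P \ P.image f) = ∑ p ∈ P, (p.wt w - w (f p)) := by
  have hsub : P.image f ⊆ Esub P :=
    image_subset_iff.2 fun p hp ↦ mem_biUnion.2 ⟨p, hp, hf p hp⟩
  have hinj : Set.InjOn f P := fun p hp q hq hpq ↦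
    (pairwiseDisjoint_edges hP).elim_finset hp hq _ (hf p hp) (hpq ▸ hf q hq)
  calc ew w (Esub P \ P.image f) = ew w (Esub P) - ∑ e ∈ P.image f, w e :=
        sum_sdiff_eq_sub hsub
    _ = ∑ p ∈ P, (p.wt w - w (f p)) := by rw [ew_Esub w hP, sum_image hinj, sum_sub_distrib]

lemma kcnt_eq (M : Finset (Sym2 α)) (p : P3 α) :
    kcnt M p = (if covered M p.x then 1 else 0) + (if covered M p.y then 1 else 0) +
      if covered M p.z then 1 else 0 := by
  rw [kcnt, card_filter, P3.verts, sum_insert (by simp [p.hxy, p.hxz]), sum_pair p.hyz, add_assoc]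

lemma kcnt_eq_three_iff :
    kcnt M p = 3 ↔ covered M p.x ∧ covered M p.y ∧ covered M p.z := by
  rw [kcnt_eq]
  grind

lemma covered_z_iff_of_kcnt_eq_two (h : kcnt M p = 2) (hy : covered M p.y) :
    covered M p.z ↔ ¬ covered M p.x := by
  rw [kcnt_eq] at h
  grind

lemma mk_xy_mem_iff_of_cls5 (h : cls5 M p) : s(p.x, p.y) ∈ M ↔ covered M p.x := by
  obtain ⟨h2, hy, hM⟩ := h
  refine ⟨fun hxy ↦ ⟨_, hxy, Sym2.mem_mk_left _ _⟩, fun hx ↦ ?_⟩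
  refine hM.elim And.left fun hyz ↦ ?_
  exact absurd hx <| (covered_z_iff_of_kcnt_eq_two h2 hy).1 ⟨_, hyz.2, Sym2.mem_mk_right _ _⟩

lemma not_cls6_of_cls5 (h : cls5 M p) : ¬ cls6 M p :=
  fun h' ↦ h.2.2.elim (fun hM ↦ h'.2.2.1 hM.1) fun hM ↦ h'.2.2.2 hM.2

lemma not_cls8_of_cls7 (h : cls7 M p) : ¬ cls8 M p :=
  fun h' ↦ h.2.elim (fun hM ↦ h'.2.1 hM.1) fun hM ↦ h'.2.2 hM.2

/-- The edge of `p` inside `V(M)` when exactly two vertices of `p` are covered, one of them the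
middle one; in particular the edge that `p` contributes to `Y_5` or `Y_6`. -/
noncomputable def innerEdge (M : Finset (Sym2 α)) (p : P3 α) : Sym2 α :=
  if covered M p.x then s(p.x, p.y) else s(p.y, p.z)

lemma ew_Y5 (w : Sym2 α → ℝ) (M : Finset (Sym2 α))
    (hP : (P : Set (P3 α)).PairwiseDisjoint P3.verts) :
    ew w (Y5 P M) = ∑ p ∈ psel P (cls5 M), w (innerEdge M p) := by
  rw [Y5, X5, ew_Esub_sdiff_image w (pairwiseDisjoint_psel hP _)]
  · refine sum_congr rfl fun p hp ↦ ?_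
    simp only [mk_xy_mem_iff_of_cls5 (mem_filter.1 hp).2, innerEdge, P3.wt]
    split_ifs <;> ring
  · intro p _
    split_ifs <;> simp [P3.edges]

lemma ew_Y6 (w : Sym2 α → ℝ) (M : Finset (Sym2 α))
    (hP : (P : Set (P3 α)).PairwiseDisjoint P3.verts) :
    ew w (Y6 P M) = ∑ p ∈ psel P (cls6 M), w (innerEdge M p) := by
  rw [Y6, X6, ew_Esub_sdiff_image w (pairwiseDisjoint_psel hP _)]
  · refine sum_congr rfl fun p _ ↦ ?_
    simp only [innerEdge, P3.wt]
    split_ifs <;> ring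
  · intro p _
    split_ifs <;> simp [P3.edges]

/-- The part of `p` inside `V(M)`. -/
def coveredVerts (M : Finset (Sym2 α)) (p : P3 α) : Set α := {v | v ∈ p.verts ∧ covered M v}

lemma mem_coveredVerts {v : α} :
    v ∈ coveredVerts M p ↔ (v = p.x ∨ v = p.y ∨ v = p.z) ∧ covered M v := by
  simp [coveredVerts, P3.verts]

lemma pairwiseDisjoint_coveredVerts (M : Finset (Sym2 α))
    (hP : (P : Set (P3 α)).PairwiseDisjoint P3.verts) :
    (P : Set (P3 α)).PairwiseDisjoint (coveredVerts M) :=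
  fun _ hp _ hq hpq ↦ Set.disjoint_left.2 fun _ hvp hvq ↦
    disjoint_left.1 (hP hp hq hpq) hvp.1 hvq.1

lemma exists_isArcSystemOn_of_kcnt_eq_two (w : Sym2 α → ℝ) (h : kcnt M p = 2)
    (hy : covered M p.y) :
    ∃ A, IsArcSystemOn (coveredVerts M p) A ∧
      ∑ a ∈ A, w s(a.1, a.2) = 2 * w (innerEdge M p) := by
  have hyS : p.y ∈ coveredVerts M p := mem_coveredVerts.2 ⟨.inr (.inl rfl), hy⟩
  by_cases hx : covered M p.x
  · rw [innerEdge, if_pos hx]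
    have hxS : p.x ∈ coveredVerts M p := mem_coveredVerts.2 ⟨.inl rfl, hx⟩
    exact exists_isArcSystemOn_sum_eq_two_mul w hxS hyS p.hxy
  · rw [innerEdge, if_neg hx]
    have hz : covered M p.z := (covered_z_iff_of_kcnt_eq_two h hy).2 hx
    have hzS : p.z ∈ coveredVerts M p := mem_coveredVerts.2 ⟨.inr (.inr rfl), hz⟩
    exact exists_isArcSystemOn_sum_eq_two_mul w hyS hzS p.hyz

lemma exists_isArcSystemOn_of_kcnt_eq_three (w : Sym2 α → ℝ) (h : kcnt M p = 3) :
    ∃ A, IsArcSystemOn (coveredVerts M p) A ∧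
      ∑ a ∈ A, w s(a.1, a.2) = p.wt w + max (w s(p.x, p.y)) (w s(p.y, p.z)) := by
  obtain ⟨hx, hy, hz⟩ := kcnt_eq_three_iff.1 h
  replace hx : p.x ∈ coveredVerts M p := mem_coveredVerts.2 ⟨.inl rfl, hx⟩
  replace hy : p.y ∈ coveredVerts M p := mem_coveredVerts.2 ⟨.inr (.inl rfl), hy⟩
  replace hz : p.z ∈ coveredVerts M p := mem_coveredVerts.2 ⟨.inr (.inr rfl), hz⟩
  rcases le_total (w s(p.y, p.z)) (w s(p.x, p.y)) with hle | hle
  · obtain ⟨A, hA, hAw⟩ := exists_isArcSystemOn_sum_eq_two_mul_add w hx hy hz p.hxy p.hyz p.hxz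
    exact ⟨A, hA, by rw [hAw, max_eq_left hle, P3.wt]; ring⟩
  · obtain ⟨A, hA, hAw⟩ := exists_isArcSystemOn_sum_eq_two_mul_add w hz hy hx
      p.hyz.symm p.hxy.symm p.hxz.symm
    rw [Sym2.eq_swap (a := p.z), Sym2.eq_swap (a := p.y) (b := p.x)] at hAw
    exact ⟨A, hA, by rw [hAw, max_eq_right hle, P3.wt]; ring⟩

/-- The weight of the arcs placed on `p`, which is its share of the bound to be reached. -/
noncomputable def arcGain (w : Sym2 α → ℝ) (M : Finset (Sym2 α)) (p : P3 α) : ℝ :=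
  (if cls5 M p ∨ cls6 M p then 2 * w (innerEdge M p) else 0) +
    if cls7 M p ∨ cls8 M p then p.wt w + max (w s(p.x, p.y)) (w s(p.y, p.z)) else 0

lemma exists_isArcSystemOn_sum_eq_arcGain (w : Sym2 α → ℝ) (M : Finset (Sym2 α)) (p : P3 α) :
    ∃ A, IsArcSystemOn (coveredVerts M p) A ∧ ∑ a ∈ A, w s(a.1, a.2) = arcGain w M p := by
  have three_of : cls7 M p ∨ cls8 M p → kcnt M p = 3 := fun h ↦ h.elim And.left And.left
  by_cases h56 : cls5 M p ∨ cls6 M p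
  · have h2 : kcnt M p = 2 := h56.elim And.left And.left
    have hy : covered M p.y := h56.elim (·.2.1) (·.2.1)
    have h78 : ¬ (cls7 M p ∨ cls8 M p) := fun h ↦ by have := three_of h; omega
    rw [arcGain, if_pos h56, if_neg h78, add_zero]
    exact exists_isArcSystemOn_of_kcnt_eq_two w h2 hy
  by_cases h78 : cls7 M p ∨ cls8 M p
  · rw [arcGain, if_neg h56, if_pos h78, zero_add]
    exact exists_isArcSystemOn_of_kcnt_eq_three w (three_of h78)
  · exact ⟨∅, isArcSystemOn_empty, by rw [arcGain, if_neg h56, if_neg h78, add_zero, sum_empty]⟩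

lemma sum_arcGain (w : Sym2 α → ℝ) (M : Finset (Sym2 α))
    (hP : (P : Set (P3 α)).PairwiseDisjoint P3.verts) :
    ∑ p ∈ P, arcGain w M p =
      2 * ew w (Y5 P M) + 2 * ew w (Y6 P M) + ew w (Esub (psel P (cls7 M))) +
        ew w (Esub (psel P (cls8 M))) + maxSum w (psel P fun p ↦ cls7 M p ∨ cls8 M p) := by
  have hsplit : ∑ p ∈ P, arcGain w M p =
      ∑ p ∈ psel P (fun p ↦ cls5 M p ∨ cls6 M p), 2 * w (innerEdge M p) +
        ∑ p ∈ psel P (fun p ↦ cls7 M p ∨ cls8 M p),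
          (p.wt w + max (w s(p.x, p.y)) (w s(p.y, p.z))) := by
    simp only [psel, sum_filter]
    rw [← sum_add_distrib]
    refine sum_congr rfl fun p _ ↦ ?_
    rw [arcGain]
    congr!
  rw [hsplit, sum_psel_or fun _ ↦ not_cls6_of_cls5, sum_add_distrib,
    sum_psel_or fun _ ↦ not_cls8_of_cls7, ew_Y5 w M hP, ew_Y6 w M hP,
    ew_Esub w (pairwiseDisjoint_psel hP _), ew_Esub w (pairwiseDisjoint_psel hP _), maxSum,
    mul_sum, mul_sum]
  ring

theorem statement_15_general (w : Sym2 α → ℝ) (M : Finset (Sym2 α)) (P : Finset (P3 α))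
    (hP : (P : Set (P3 α)).PairwiseDisjoint P3.verts) :
    ∃ A : Finset (α × α),
      (∀ a ∈ A, covered M a.1 ∧ covered M a.2 ∧ a.1 ≠ a.2) ∧
      (∀ v : α, #{a ∈ A | a.2 = v} ≤ 1) ∧
      (∀ v : α, #{a ∈ A | a.1 = v} ≤ 2) ∧
      2 * ew w (Y5 P M) + 2 * ew w (Y6 P M) + ew w (Esub (psel P (cls7 M))) +
        ew w (Esub (psel P (cls8 M))) + maxSum w (psel P fun p ↦ cls7 M p ∨ cls8 M p) =
        ∑ a ∈ A, w s(a.1, a.2) := by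
  obtain ⟨A, hA, hAw⟩ := exists_isArcSystemOn_biUnion (pairwiseDisjoint_coveredVerts M hP)
    fun p _ ↦ exists_isArcSystemOn_sum_eq_arcGain w M p
  have hcov : ∀ v ∈ ⋃ p ∈ P, coveredVerts M p, covered M v := fun v hv ↦ by
    obtain ⟨p, -, hvp⟩ := Set.mem_iUnion₂.1 hv
    exact hvp.2
  exact ⟨A, fun a ha ↦ ⟨hcov _ (hA.fst_mem a ha), hcov _ (hA.snd_mem a ha), hA.fst_ne_snd a ha⟩,
    hA.inDegree_le, hA.outDegree_le, by rw [hAw, sum_arcGain w M hP]⟩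

end Paths

theorem statement_15 (n : ℕ) (hn : Fintype.card V = n) (h3 : 3 ∣ n)
    (w : Sym2 V → ℝ) (hw : ∀ e : Sym2 V, 0 ≤ w e)
    (M : Finset (Sym2 V)) (hM : IsMaxMatchingOfSize w (n / 3) M)
    (Pstar : Finset (P3 V)) (hP : IsMaxPacking w Pstar) (hAss : Ass Pstar M) :
    ∃ A : Finset (V × V),
      (∀ a ∈ A, covered M a.1 ∧ covered M a.2 ∧ a.1 ≠ a.2) ∧
      (∀ v : V, (A.filter fun a => a.2 = v).card ≤ 1) ∧
      (∀ v : V, (A.filter fun a => a.1 = v).card ≤ 2) ∧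
      2 * ew w (Y5 Pstar M) + 2 * ew w (Y6 Pstar M) + ew w (Esub (psel Pstar (cls7 M))) +
        ew w (Esub (psel Pstar (cls8 M))) +
        maxSum w (psel Pstar fun p => cls7 M p ∨ cls8 M p) ≤
        ∑ a ∈ A, w s(a.1, a.2) := by
  obtain ⟨A, hA, hin, hout, hAw⟩ := statement_15_general w M Pstar fun p hp q ↦ hP.1.2.1 p hp q
  exact ⟨A, hA, hin, hout, hAw.le⟩

end MW3PP
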